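/- Let M ∈ ℝ⁵ be the moment vector of a single Gaussian mode, i.e. M_k = ρ Δ_k(v, σ²) for k = 0, …, 4 with ρ > 0, σ > 0, v ∈ ℝ, and let F = (M₁, …, M₄, ρ Δ₅(v, σ²)). With δ⁺ = v + √3 σ, the Hankel matrix H₂(δ⁺M − F) is positive semidefinite and satisfies det H₂(δ⁺M − F) = 0. -/

import Mathlib

open MeasureTheory Real

/-- The `k`-th moment `Δ_k(v, s²)` of the normal distribution with mean `v` and variance `s²`. -/
noncomputable def gaussMoment (v s : ℝ) (k : ℕ) : ℝ :=
  ∫ x : ℝ, x ^ k * ((2 * π * s ^ 2) ^ (-(1 : ℝ) / 2) * Real.exp (-(x - v) ^ 2 / (2 * s ^ 2)))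

/-- The `3×3` Hankel matrix `H₂(c)` of a vector `c ∈ ℝ⁵`, with `(j,k)` entry `c_{j+k}`. -/
noncomputable def hankel2 (c : Fin 5 → ℝ) : Matrix (Fin 3) (Fin 3) ℝ :=
  Matrix.of fun j k => c ⟨j.1 + k.1, by have := j.isLt; have := k.isLt; omega⟩

lemma gm_integrable (v s : ℝ) (hs : 0 < s) (k : ℕ) :
    Integrable (fun x : ℝ => x ^ k * Real.exp (-(x - v) ^ 2 / (2 * s ^ 2))) := by
  obtain ⟨w, hw⟩ : ∃ w : NNReal, (w : ℝ) = s ^ 2 := ⟨(s ^ 2).toNNReal, by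
    rw [Real.coe_toNNReal _ (by positivity)]⟩
  have hv : w ≠ 0 := by
    intro h
    rw [h] at hw
    simp at hw
    exact (pow_pos hs 2).ne hw
  have h1 : Integrable (fun x : ℝ => x ^ k)
      (ProbabilityTheory.gaussianReal v w) := by
    have := (ProbabilityTheory.memLp_id_gaussianReal (μ := v) (v := w)
      (k : NNReal)).integrable_norm_pow'
    refine (integrable_norm_iff (by fun_prop)).1 ?_
    simpa using this
  rw [ProbabilityTheory.gaussianReal_of_var_ne_zero _ hv,
    integrable_withDensity_iff_integrable_smul' (ProbabilityTheory.measurable_gaussianPDF v w)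
      (Filter.Eventually.of_forall fun x => ProbabilityTheory.gaussianPDF_lt_top)] at h1
  have h2 := h1.const_mul (√(2 * π * s ^ 2))
  refine h2.congr (Filter.Eventually.of_forall fun x => ?_)
  have h3 : √(2 * π * s ^ 2) ≠ 0 := by positivity
  simp only [ProbabilityTheory.toReal_gaussianPDF, ProbabilityTheory.gaussianPDFReal, smul_eq_mul,
    hw]
  field_simp

lemma gm_zero (v s : ℝ) (hs : 0 < s) : gaussMoment v s 0 = 1 := by
  obtain ⟨w, hw⟩ : ∃ w : NNReal, (w : ℝ) = s ^ 2 := ⟨(s ^ 2).toNNReal, by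
    rw [Real.coe_toNNReal _ (by positivity)]⟩
  have hv : w ≠ 0 := by
    intro h
    rw [h] at hw
    simp at hw
    exact (pow_pos hs 2).ne hw
  rw [← ProbabilityTheory.integral_gaussianPDFReal_eq_one v hv]
  unfold gaussMoment
  congr 1
  ext x
  have : (2 * π * s ^ 2) ^ (-(1 : ℝ) / 2) = (√(2 * π * s ^ 2))⁻¹ := by
    rw [Real.sqrt_eq_rpow, ← Real.rpow_neg (by positivity)]
    norm_num
  simp [ProbabilityTheory.gaussianPDFReal, this, hw]

lemma gm_rec (v s : ℝ) (hs : 0 < s) (n : ℕ) :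
    gaussMoment v s (n + 1) = v * gaussMoment v s n + n * s ^ 2 * gaussMoment v s (n - 1) := by
  set E : ℝ → ℝ := fun x => Real.exp (-(x - v) ^ 2 / (2 * s ^ 2)) with hE
  have hd : ∀ x, HasDerivAt (fun x => x ^ n * E x)
      (n * (x ^ (n - 1) * E x) - (s ^ 2)⁻¹ * (x ^ (n + 1) * E x)
        + v * (s ^ 2)⁻¹ * (x ^ n * E x)) x := by
    intro x
    have h1 : HasDerivAt (fun x : ℝ => -(x - v) ^ 2 / (2 * s ^ 2)) (-(x - v) / s ^ 2) x := by
      have := (((hasDerivAt_id x).sub_const v).pow 2).neg.div_const (2 * s ^ 2)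
      refine this.congr_deriv ?_
      simp
      field_simp
      ring
    refine ((hasDerivAt_pow n x).mul h1.exp).congr_deriv ?_
    simp only [hE]
    field_simp
    ring
  have hI := gm_integrable v s hs
  have ha : Integrable (fun x => (n:ℝ) * (x ^ (n - 1) * E x)) := (hI (n - 1)).const_mul _
  have hb : Integrable (fun x => (s ^ 2)⁻¹ * (x ^ (n + 1) * E x)) := (hI (n + 1)).const_mul _
  have hc : Integrable (fun x => v * (s ^ 2)⁻¹ * (x ^ n * E x)) := (hI n).const_mul _
  have h0 := integral_eq_zero_of_hasDerivAt_of_integrable hd ((ha.sub hb).add hc) (hI n)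
  have hab : Integrable (fun x => (n:ℝ) * (x ^ (n - 1) * E x)
      - (s ^ 2)⁻¹ * (x ^ (n + 1) * E x)) := ha.sub hb
  rw [integral_add hab hc, integral_sub ha hb, integral_const_mul, integral_const_mul,
    integral_const_mul] at h0
  have hg : ∀ k, gaussMoment v s k = (2 * π * s ^ 2) ^ (-(1 : ℝ) / 2) * ∫ x, x ^ k * E x := by
    intro k
    rw [gaussMoment, ← integral_const_mul]
    congr 1
    ext x
    simp only [hE]
    ring
  rw [hg, hg, hg]
  have h2 : ∫ x, x ^ (n + 1) * E x
      = v * (∫ x, x ^ n * E x) + n * s ^ 2 * ∫ x, x ^ (n - 1) * E x := by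
    field_simp at h0
    linarith
  rw [h2]
  ring

/-- for a single Gaussian mode `M_k = ρ Δ_k(v,σ²)` with flux
`F = (M₁,…,M₄, ρΔ₅(v,σ²))` and `δ⁺ = v + √3 σ`, the matrix `H₂(δ⁺M − F)` is positive
semidefinite with vanishing determinant. -/
theorem single_gaussian_boundary (ρ v σ : ℝ) (hρ : 0 < ρ) (hσ : 0 < σ)
    (M F : Fin 5 → ℝ)
    (hM : ∀ k : Fin 5, M k = ρ * gaussMoment v σ k.1)
    (hF : ∀ k : Fin 5, F k = ρ * gaussMoment v σ (k.1 + 1)) :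
    (hankel2 (fun k => (v + Real.sqrt 3 * σ) * M k - F k)).PosSemidef ∧
    (hankel2 (fun k => (v + Real.sqrt 3 * σ) * M k - F k)).det = 0 := by
  have g0 := gm_zero v σ hσ
  have g1 := gm_rec v σ hσ 0
  have g2 := gm_rec v σ hσ 1
  have g3 := gm_rec v σ hσ 2
  have g4 := gm_rec v σ hσ 3
  have g5 := gm_rec v σ hσ 4
  norm_num at g1 g2 g3 g4 g5
  rw [g0] at g1 g2
  rw [g1] at g2 g3
  rw [g2] at g3 g4
  rw [g3] at g4 g5
  rw [g4] at g5
  obtain ⟨r, hr⟩ : ∃ r, r = √3 := ⟨_, rfl⟩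
  have hr0 : 0 ≤ r := hr ▸ Real.sqrt_nonneg 3
  have hr2 : r ^ 2 = 3 := by rw [hr]; norm_num
  rw [← hr]
  have key : ∀ k : Fin 5, (v + r * σ) * M k - F k
      = ρ * σ * r / 3 * (v - r * σ) ^ k.1 + 2 * (ρ * σ * r) / 3 * v ^ k.1 := by
    have hr3 : r ^ 3 = 3 * r := by rw [pow_succ, hr2]
    have hr4 : r ^ 4 = 9 := by rw [show r ^ 4 = (r ^ 2) ^ 2 by ring, hr2]; norm_num
    have hr5 : r ^ 5 = 9 * r := by rw [pow_succ, hr4]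
    intro k
    rw [hM, hF]
    fin_cases k <;> simp [g0, g1, g2, g3, g4, g5] <;> ring_nf <;>
      simp only [hr2, hr3, hr4, hr5] <;> ring
  have hH : hankel2 (fun k => (v + r * σ) * M k - F k)
      = (ρ * σ * r / 3) • Matrix.vecMulVec (fun i : Fin 3 => (v - r * σ) ^ i.1)
          (star fun i : Fin 3 => (v - r * σ) ^ i.1)
        + (2 * (ρ * σ * r) / 3) • Matrix.vecMulVec (fun i : Fin 3 => v ^ i.1)
          (star fun i : Fin 3 => v ^ i.1) := by
    ext i j
    simp only [hankel2, key, Matrix.of_apply, Matrix.add_apply, Matrix.smul_apply,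
      Matrix.vecMulVec_apply, smul_eq_mul, Pi.star_apply, star_trivial, pow_add]
  rw [hH]
  constructor
  · exact ((Matrix.posSemidef_vecMulVec_self_star _).smul (by positivity)).add
      ((Matrix.posSemidef_vecMulVec_self_star _).smul (by positivity))
  · rw [Matrix.det_fin_three]
    simp [Matrix.vecMulVec_apply]
    ring
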